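/- arXiv:2301.00071 — 2 statements merged into one kernel-verified Lean document; each statement's English description precedes it below -/
import Mathlib

section
/- For all integers l ≥ 0 and complex α, β with Re(α) > -1/2 and Re(β) > -1/2, the integral ∫_{-1}^{1} (P_l^{(α,β)}(t))^2 (1-t)^{2α} (1+t)^{2β} dt equals 2^{2α+2β+1} · (1/2)_l / (l!)^2 · B(2α+1, 2β+1) · (α+1)_l (β+1)_l / (α+β+3/2)_l, where (a)_k denotes the rising factorial (Pochhammer symbol) and B is the Beta function. -/
open MeasureTheory intervalIntegral

noncomputable def ascPoch (a : ℂ) (k : ℕ) : ℂ := (ascPochhammer ℂ k).eval a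

noncomputable def betaFn (a b : ℂ) : ℂ := Complex.Gamma a * Complex.Gamma b / Complex.Gamma (a + b)

/-- Jacobi polynomial via Rodrigues' formula, as a function of a real variable. -/
noncomputable def jacobiP (l : ℕ) (α β : ℂ) (t : ℝ) : ℂ :=
  ((-1 : ℂ) ^ l / (2 ^ l * (l.factorial : ℂ))) * (1 - (t : ℂ)) ^ (-α) * (1 + (t : ℂ)) ^ (-β) *
    iteratedDeriv l (fun s : ℝ => (1 - (s : ℂ)) ^ ((l : ℂ) + α) * (1 + (s : ℂ)) ^ ((l : ℂ) + β)) t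

namespace JacobiAux

open Polynomial

/-- Polynomial part of the `k`-th derivative of `(1-t)^a (1+t)^b`. -/
noncomputable def R (a b : ℂ) : ℕ → ℂ[X]
  | 0 => 1
  | k + 1 => (1 - X ^ 2) * derivative (R a b k)
      + (-C (a - k) * (1 + X) + C (b - k) * (1 - X)) * R a b k

theorem R_deriv (a b : ℂ) (k : ℕ) (x : ℂ) :
    (derivative (R a b (k + 1))).eval x = (k + 1) * (k - (a + b)) * (R a b k).eval x := by
  induction k generalizing x with
  | zero =>
    simp [R]
    ring
  | succ k ih =>
    have h1 : derivative (R a b (k + 1)) = C ((k + 1) * (k - (a + b))) * R a b k := by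
      apply Polynomial.funext
      intro r
      rw [ih, eval_mul, eval_C]
    have h2 : (R a b (k + 1)).eval x = (1 - x ^ 2) * (derivative (R a b k)).eval x
        + (-(a - k) * (1 + x) + (b - k) * (1 - x)) * (R a b k).eval x := by
      simp [R]
    rw [R, h1]
    simp only [derivative_mul, derivative_add, derivative_sub, derivative_neg, derivative_C,
      derivative_X, derivative_one, derivative_X_pow, h1, eval_add, eval_mul, eval_sub, eval_neg,
      eval_C, eval_X, eval_one, eval_pow, eval_zero]
    push_cast
    rw [h2]
    simp
    ring

theorem R_succ_eval (a b : ℂ) (k : ℕ) (x : ℂ) :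
    (R a b (k + 1)).eval x = (1 - x ^ 2) * (derivative (R a b k)).eval x
        + (-(a - k) * (1 + x) + (b - k) * (1 - x)) * (R a b k).eval x := by
  simp [R]

/-- derivative of `(1-t)^a (1+t)^b Q(t)`, inside the interval -/
theorem hasDeriv (a b : ℂ) (Q : ℂ[X]) (t : ℝ) (ht : t ∈ Set.Ioo (-1 : ℝ) 1) :
    HasDerivAt (fun s : ℝ => (1 - (s : ℂ)) ^ a * (1 + (s : ℂ)) ^ b * Q.eval (s : ℂ))
      ((1 - (t : ℂ)) ^ (a - 1) * (1 + (t : ℂ)) ^ (b - 1) *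
        ((1 - (t : ℂ) ^ 2) * (derivative Q).eval (t : ℂ)
          + (-a * (1 + t) + b * (1 - t)) * Q.eval (t : ℂ))) t := by
  have h1 : (1 - (t : ℂ)) ∈ Complex.slitPlane := by
    left; simp; linarith [ht.2]
  have h2 : (1 + (t : ℂ)) ∈ Complex.slitPlane := by
    left; simp; linarith [ht.1]
  have n1 := Complex.slitPlane_ne_zero h1
  have n2 := Complex.slitPlane_ne_zero h2
  have d1 : HasDerivAt (fun z : ℂ => (1 - z) ^ a) (a * (1 - (t : ℂ)) ^ (a - 1) * (-1)) (t : ℂ) :=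
    ((hasDerivAt_id (t : ℂ)).const_sub 1).cpow_const h1
  have d2 : HasDerivAt (fun z : ℂ => (1 + z) ^ b) (b * (1 + (t : ℂ)) ^ (b - 1) * 1) (t : ℂ) :=
    ((hasDerivAt_id (t : ℂ)).const_add 1).cpow_const h2
  have d3 := ((d1.mul d2).mul (Q.hasDerivAt (t : ℂ))).comp_ofReal
  refine d3.congr_deriv ?_
  have e1 : (1 - (t : ℂ)) ^ a = (1 - (t : ℂ)) ^ (a - 1) * (1 - t) := by
    rw [Complex.cpow_sub _ _ n1, Complex.cpow_one]; field_simp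
  have e2 : (1 + (t : ℂ)) ^ b = (1 + (t : ℂ)) ^ (b - 1) * (1 + t) := by
    rw [Complex.cpow_sub _ _ n2, Complex.cpow_one]; field_simp
  simp only [Pi.mul_apply]
  rw [e1, e2]
  ring

theorem iter (a b : ℂ) (k : ℕ) (t : ℝ) (ht : t ∈ Set.Ioo (-1 : ℝ) 1) :
    iteratedDeriv k (fun s : ℝ => (1 - (s : ℂ)) ^ a * (1 + (s : ℂ)) ^ b) t
      = (1 - (t : ℂ)) ^ (a - k) * (1 + (t : ℂ)) ^ (b - k) * (R a b k).eval (t : ℂ) := by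
  induction k generalizing t with
  | zero => simp [R]
  | succ k ih =>
    rw [iteratedDeriv_succ]
    have : iteratedDeriv k (fun s : ℝ => (1 - (s : ℂ)) ^ a * (1 + (s : ℂ)) ^ b) =ᶠ[nhds t]
        fun t : ℝ => (1 - (t : ℂ)) ^ (a - k) * (1 + (t : ℂ)) ^ (b - k) * (R a b k).eval (t : ℂ) :=
      Filter.eventuallyEq_of_mem (Ioo_mem_nhds ht.1 ht.2) (fun s hs => ih s hs)
    rw [this.deriv_eq, (hasDeriv _ _ _ t ht).deriv, R_succ_eval]
    push_cast
    rw [sub_sub, sub_sub]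

theorem intble (u v : ℂ) (hu : 0 < u.re) (hv : 0 < v.re) :
    IntervalIntegrable (fun t : ℝ => (1 - (t : ℂ)) ^ (u - 1) * (1 + (t : ℂ)) ^ (v - 1))
      volume (-1) 1 := by
  have h := Complex.betaIntegral_convergent hv hu
  have h2 := ((h.comp_mul_left (c := 1 / 2)).comp_add_left 1).const_mul
    ((2 : ℂ) ^ (u - 1) * (2 : ℂ) ^ (v - 1))
  norm_num at h2
  refine h2.congr_ae ?_
  refine (ae_restrict_mem measurableSet_uIoc).mono ?_
  intro t ht
  rw [Set.uIoc_of_le (by norm_num)] at ht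
  have c2 : (2 : ℂ) = ((2 : ℝ) : ℂ) := by norm_num
  have e1 : (1 - (t : ℂ)) ^ (u - 1) = (2 : ℂ) ^ (u - 1) * (1 - 1 / 2 * (1 + (t : ℂ))) ^ (u - 1) := by
    have : (1 - 1 / 2 * (1 + (t : ℂ))) = ((1 - 1 / 2 * (1 + t) : ℝ) : ℂ) := by push_cast; ring
    rw [this, c2, ← Complex.mul_cpow_ofReal_nonneg (by norm_num) (by linarith [ht.2])]
    congr 1; push_cast; ring
  have e2 : (1 + (t : ℂ)) ^ (v - 1) = (2 : ℂ) ^ (v - 1) * (1 / 2 * (1 + (t : ℂ))) ^ (v - 1) := by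
    have : (1 / 2 * (1 + (t : ℂ))) = ((1 / 2 * (1 + t) : ℝ) : ℂ) := by push_cast; ring
    rw [this, c2, ← Complex.mul_cpow_ofReal_nonneg (by norm_num) (by linarith [ht.1])]
    congr 1; push_cast; ring
  simp only [e1, e2]
  ring

theorem intblePoly (u v : ℂ) (hu : 0 < u.re) (hv : 0 < v.re) (Q : ℂ[X]) :
    IntervalIntegrable (fun t : ℝ => (1 - (t : ℂ)) ^ (u - 1) * (1 + (t : ℂ)) ^ (v - 1)
      * Q.eval (t : ℂ)) volume (-1) 1 := by
  refine (intble u v hu hv).mul_continuousOn ?_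
  exact (Q.continuous.comp Complex.continuous_ofReal).continuousOn

/-- The integral of an exact derivative vanishes. -/
theorem int_exact (u v : ℂ) (hu : 0 < u.re) (hv : 0 < v.re) (Q S : ℂ[X])
    (hS : ∀ x : ℂ, S.eval x = (1 - x ^ 2) * (derivative Q).eval x
          + (-u * (1 + x) + v * (1 - x)) * Q.eval x) :
    ∫ t in (-1 : ℝ)..1, (1 - (t : ℂ)) ^ (u - 1) * (1 + (t : ℂ)) ^ (v - 1) * S.eval (t : ℂ) = 0 := by
  have hu0 : u ≠ 0 := by rintro rfl; simp at hu
  have hv0 : v ≠ 0 := by rintro rfl; simp at hv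
  have key := integral_eq_sub_of_hasDerivAt_of_le (a := (-1 : ℝ)) (b := 1) (by norm_num)
    (f := fun s : ℝ => (1 - (s : ℂ)) ^ u * (1 + (s : ℂ)) ^ v * Q.eval (s : ℂ))
    (f' := fun t : ℝ => (1 - (t : ℂ)) ^ (u - 1) * (1 + (t : ℂ)) ^ (v - 1) * S.eval (t : ℂ))
    ?_ ?_ (intblePoly u v hu hv S)
  · rw [key]
    simp [Complex.zero_cpow hu0, Complex.zero_cpow hv0]
  · intro t ht
    have c1 : ContinuousWithinAt (fun s : ℝ => (1 - (s : ℂ)) ^ u) (Set.Icc (-1) 1) t := by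
      have : ContinuousAt (fun x : ℝ => (x : ℂ) ^ u) (1 - t) :=
        Complex.continuousAt_ofReal_cpow_const _ _ (Or.inl hu)
      have h3 := ContinuousAt.comp (f := fun s : ℝ => 1 - s) (x := t) this (by fun_prop)
      refine ContinuousAt.continuousWithinAt ?_
      convert h3 using 2
      simp
    have c2 : ContinuousWithinAt (fun s : ℝ => (1 + (s : ℂ)) ^ v) (Set.Icc (-1) 1) t := by
      have : ContinuousAt (fun x : ℝ => (x : ℂ) ^ v) (1 + t) :=
        Complex.continuousAt_ofReal_cpow_const _ _ (Or.inl hv)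
      have h3 := ContinuousAt.comp (f := fun s : ℝ => 1 + s) (x := t) this (by fun_prop)
      refine ContinuousAt.continuousWithinAt ?_
      convert h3 using 2
      simp
    exact (c1.mul c2).mul (Q.continuous.comp Complex.continuous_ofReal).continuousWithinAt
  · intro t ht
    have := hasDeriv u v Q t ht
    rw [← hS] at this
    exact this

/-- the weighted square integral -/
noncomputable def K (l : ℕ) (α β : ℂ) : ℂ :=
  ∫ t in (-1 : ℝ)..1, (1 - (t : ℂ)) ^ (2 * α) * (1 + (t : ℂ)) ^ (2 * β)
    * ((R (α + l) (β + l) l) ^ 2).eval (t : ℂ)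

theorem K_zero (α β : ℂ) (hα : α.re > -1/2) (hβ : β.re > -1/2) :
    K 0 α β = (2 : ℂ) ^ (2 * α + 2 * β + 1) * betaFn (2 * α + 1) (2 * β + 1) := by
  have hA : 0 < (2 * α + 1).re := by simp; linarith
  have hB : 0 < (2 * β + 1).re := by simp; linarith
  have hG : Complex.Gamma (2 * β + 1 + (2 * α + 1)) ≠ 0 := by
    apply Complex.Gamma_ne_zero_of_re_pos
    rw [Complex.add_re]; linarith
  have h := Complex.betaIntegral_scaled (2 * β + 1) (2 * α + 1) (a := 2) (by norm_num)
  have h2 := Complex.Gamma_mul_Gamma_eq_betaIntegral hB hA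
  have h3 := intervalIntegral.integral_comp_add_left
    (fun x : ℝ => (x : ℂ) ^ (2 * β + 1 - 1) * (((2 : ℝ) : ℂ) - x) ^ (2 * α + 1 - 1))
    (a := (-1 : ℝ)) (b := 1) (1 : ℝ)
  have h4 : K 0 α β = ∫ x in (-1 : ℝ)..1, (((1 + x : ℝ)) : ℂ) ^ (2 * β + 1 - 1)
      * (((2 : ℝ) : ℂ) - ((1 + x : ℝ) : ℂ)) ^ (2 * α + 1 - 1) := by
    unfold K
    apply intervalIntegral.integral_congr
    intro t _
    have : (2 : ℂ) - (1 + t) = 1 - t := by ring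
    simp [R, this]
    ring
  rw [h4, h3]
  norm_num at h ⊢
  rw [h, betaFn]
  rw [show 2 * α + 1 + (2 * β + 1) = 2 * β + 1 + (2 * α + 1) by ring, mul_comm (Complex.Gamma _), h2]
  rw [mul_div_cancel_left₀ _ hG]
  congr 2
  ring

theorem K_succ (l : ℕ) (α β : ℂ) (hα : α.re > -1/2) (hβ : β.re > -1/2) :
    2 * (2 * α + 1) * (2 * β + 1) * K (l + 1) α β =
      (1 + (α + β)) * (2 + (α + β)) * (2 * l + 1) * (α + β + l + 5 / 2) * K l (α + 1) (β + 1) := by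
  have hA : 0 < (2 * α + 1).re := by simp; linarith
  have hB : 0 < (2 * β + 1).re := by simp; linarith
  obtain ⟨a, ha⟩ : ∃ a, a = α + 1 + l := ⟨_, rfl⟩
  obtain ⟨b, hb⟩ : ∃ b, b = β + 1 + l := ⟨_, rfl⟩
  have hK1 : K (l + 1) α β = ∫ t in (-1 : ℝ)..1,
      (1 - (t : ℂ)) ^ (2 * α + 1 - 1) * (1 + (t : ℂ)) ^ (2 * β + 1 - 1)
        * ((R a b (l + 1)) ^ 2).eval (t : ℂ) := by
    unfold K
    rw [show α + ((l + 1 : ℕ) : ℂ) = a by rw [ha]; push_cast; ring,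
      show β + ((l + 1 : ℕ) : ℂ) = b by rw [hb]; push_cast; ring]
    simp
  have hK0 : K l (α + 1) (β + 1) = ∫ t in (-1 : ℝ)..1,
      (1 - (t : ℂ)) ^ (2 * α + 1 - 1) * (1 + (t : ℂ)) ^ (2 * β + 1 - 1)
        * ((1 - X ^ 2) ^ 2 * (R a b l) ^ 2).eval (t : ℂ) := by
    unfold K
    rw [← ha, ← hb]
    apply intervalIntegral.integral_congr_Ioo_of_le (by norm_num)
    intro t ht
    have n1 : (1 - (t : ℂ)) ≠ 0 := by
      have : (1 - t) ≠ 0 := by linarith [ht.2]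
      exact_mod_cast this
    have n2 : (1 + (t : ℂ)) ≠ 0 := by
      have : (1 + t) ≠ 0 := by linarith [ht.1]
      exact_mod_cast this
    have e1 : (1 - (t : ℂ)) ^ (2 * (α + 1)) = (1 - (t : ℂ)) ^ (2 * α + 1 - 1) * (1 - t) ^ 2 := by
      rw [← Complex.cpow_natCast, ← Complex.cpow_add _ _ n1]; congr 1; push_cast; ring
    have e2 : (1 + (t : ℂ)) ^ (2 * (β + 1)) = (1 + (t : ℂ)) ^ (2 * β + 1 - 1) * (1 + t) ^ 2 := by
      rw [← Complex.cpow_natCast, ← Complex.cpow_add _ _ n2]; congr 1; push_cast; ring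
    simp only [e1, e2, eval_mul, eval_pow, eval_sub, eval_one, eval_X]
    ring
  rw [hK1, hK0, ← sub_eq_zero, ← intervalIntegral.integral_const_mul,
    ← intervalIntegral.integral_const_mul, ← intervalIntegral.integral_sub
    ((intblePoly _ _ hA hB _).const_mul _) ((intblePoly _ _ hA hB _).const_mul _)]
  -- data of the exact form
  obtain ⟨σ, hσ⟩ : ∃ σ, σ = α + β := ⟨_, rfl⟩
  obtain ⟨n, hn⟩ : ∃ n : ℂ, n = ((l : ℂ) + 1) * (l - (a + b)) := ⟨_, rfl⟩
  obtain ⟨κ, hκ⟩ : ∃ κ, κ = -(1 + σ) * (3 / 2 + σ) := ⟨_, rfl⟩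
  obtain ⟨A, hAp⟩ : ∃ A : ℂ[X], A = C (1 + σ) * X + C (β - α) := ⟨_, rfl⟩
  obtain ⟨D, hD⟩ : ∃ D : ℂ[X], D = -C n * A + C (2 * κ) * X
    - C κ * (C (β - α) - C σ * X) := ⟨_, rfl⟩
  have hdA : derivative A = C (1 + σ) := by simp [hAp]
  have hdD : derivative D = C (-n * (1 + σ) + 2 * κ + κ * σ) := by
    simp [hD, hdA]
  have key := int_exact (2 * α + 1) (2 * β + 1) hA hB
    (-(A * (R a b (l + 1)) ^ 2 + C (2 * κ) * (1 - X ^ 2) * R a b l * R a b (l + 1)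
      + D * (1 - X ^ 2) * (R a b l) ^ 2))
    (C (2 * (2 * α + 1) * (2 * β + 1)) * R a b (l + 1) ^ 2 -
      C ((1 + (α + β)) * (2 + (α + β)) * (2 * l + 1) * (α + β + l + 5 / 2)) *
        ((1 - X ^ 2) ^ 2 * (R a b l) ^ 2)) ?_
  · rw [← key]
    apply intervalIntegral.integral_congr
    intro t _
    simp only [eval_sub, eval_mul, eval_C]
    ring
  · intro x
    have r1 := R_deriv a b l x
    have r0 := R_succ_eval a b l x
    obtain ⟨y, hy⟩ : ∃ y, y = (R a b l).eval x := ⟨_, rfl⟩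
    obtain ⟨z, hz⟩ : ∃ z, z = (R a b (l + 1)).eval x := ⟨_, rfl⟩
    obtain ⟨dy, hdy⟩ : ∃ y, y = (derivative (R a b l)).eval x := ⟨_, rfl⟩
    have hDx : D.eval x = -n * A.eval x + 2 * κ * x - κ * (β - α - σ * x) := by
      simp [hD]
    have hAx : A.eval x = (1 + σ) * x + (β - α) := by simp [hAp]
    simp only [derivative_neg, derivative_mul, derivative_add, derivative_sub, derivative_C,
      derivative_X, derivative_one, derivative_X_pow, derivative_pow, hdA, hdD, eval_add, eval_mul,
      eval_sub, eval_neg, eval_C, eval_X, eval_one, eval_pow, eval_zero, r1, hDx, hAx, ← hy, ← hz,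
      ← hdy] at r0 ⊢
    simp
    have e : (1 - x ^ 2) * dy = z - (-(a - l) * (1 + x) + (b - l) * (1 - x)) * y := by
      rw [r0]; ring
    subst hn hκ hσ ha hb
    linear_combination (2 * (-(1 + (α + β)) * (3 / 2 + (α + β))) * (1 - x ^ 2) * z
      + 2 * (-(((l : ℂ) + 1) * (l - (α + 1 + l + (β + 1 + l)))) * ((1 + (α + β)) * x + (β - α))
      + 2 * (-(1 + (α + β)) * (3 / 2 + (α + β))) * x
      - (-(1 + (α + β)) * (3 / 2 + (α + β))) * (β - α - (α + β) * x)) * (1 - x ^ 2) * y) * e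

theorem poch_succ_left (a : ℂ) (n : ℕ) : ascPoch a (n + 1) = a * ascPoch (a + 1) n := by
  unfold ascPoch
  rw [ascPochhammer_succ_left]
  simp

theorem poch_succ_right (a : ℂ) (n : ℕ) : ascPoch a (n + 1) = ascPoch a n * (a + n) := by
  unfold ascPoch
  exact ascPochhammer_succ_eval n a

theorem poch_ne (a : ℂ) (ha : 0 < a.re) (n : ℕ) : ascPoch a n ≠ 0 := by
  induction n with
  | zero => simp [ascPoch]
  | succ n ih =>
    rw [poch_succ_right]
    refine mul_ne_zero ih ?_
    intro h
    have := congrArg Complex.re h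
    simp at this
    have : (0 : ℝ) ≤ n := n.cast_nonneg
    linarith

theorem ne_of_re {z : ℂ} (h : 0 < z.re) : z ≠ 0 := by
  rintro rfl
  simp at h

theorem Gamma_two (z : ℂ) (h : 0 < z.re) :
    Complex.Gamma (z + 2) = (z + 1) * z * Complex.Gamma z := by
  have h1 : z + 1 ≠ 0 := ne_of_re (by simp; linarith)
  rw [show z + 2 = z + 1 + 1 by ring, Complex.Gamma_add_one _ h1,
    Complex.Gamma_add_one _ (ne_of_re h)]
  ring

theorem K_formula (l : ℕ) : ∀ (α β : ℂ), α.re > -1/2 → β.re > -1/2 →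
    K l α β = 4 ^ l * ((2 : ℂ) ^ (2 * α + 2 * β + 1) * ascPoch (1/2) l *
        betaFn (2 * α + 1) (2 * β + 1) *
        (ascPoch (α + 1) l * ascPoch (β + 1) l / ascPoch (α + β + 3/2) l)) := by
  induction l with
  | zero =>
    intro α β hα hβ
    rw [K_zero α β hα hβ]
    simp [ascPoch]
  | succ l ih =>
    intro α β hα hβ
    have hA : 0 < (2 * α + 1).re := by simp; linarith
    have hB : 0 < (2 * β + 1).re := by simp; linarith
    have hAB : 0 < (2 * α + 1 + (2 * β + 1)).re := by rw [Complex.add_re]; linarith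
    have hs : 0 < (α + β + 3 / 2).re := by simp; norm_num; linarith
    have hl : (0 : ℝ) ≤ l := l.cast_nonneg
    have nA := ne_of_re hA
    have nB := ne_of_re hB
    have n0 := ne_of_re hs
    have n1 : α + β + 3 / 2 + 1 ≠ 0 := ne_of_re (by rw [Complex.add_re]; simp only [Complex.one_re]; linarith)
    have n2 : α + β + 1 ≠ 0 := ne_of_re (by simp; linarith)
    have n3 : α + β + 2 ≠ 0 := ne_of_re (by simp; linarith)
    have n4 : α + β + 3 / 2 + (l + 1) ≠ 0 :=
      ne_of_re (by rw [Complex.add_re]; simp only [Complex.add_re, Complex.natCast_re, Complex.one_re] at *; linarith)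
    have nG := Complex.Gamma_ne_zero_of_re_pos hAB
    have hP := poch_ne _ hs (l + 1)
    have hQ : ascPoch (α + β + 3 / 2 + 1 + 1) l ≠ 0 := by
      apply poch_ne
      rw [Complex.add_re, Complex.add_re]; simp only [Complex.one_re]; linarith
    have step := K_succ l α β hα hβ
    rw [ih (α + 1) (β + 1) (by simp; linarith) (by simp; linarith)] at step
    have hpow : (2 : ℂ) ^ (2 * (α + 1) + 2 * (β + 1) + 1) = 16 * (2 : ℂ) ^ (2 * α + 2 * β + 1) := by
      rw [show 2 * (α + 1) + 2 * (β + 1) + 1 = 2 * α + 2 * β + 1 + (4 : ℕ) by push_cast; ring,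
        Complex.cpow_add _ _ (by norm_num), Complex.cpow_natCast]
      ring
    have hbeta : betaFn (2 * (α + 1) + 1) (2 * (β + 1) + 1) * (2 * (α + β + 1) * (2 * (α + β + 3 / 2)) *
          (2 * (α + β + 2)) * (2 * (α + β + 3 / 2 + 1)))
        = betaFn (2 * α + 1) (2 * β + 1) * ((2 * α + 2) * (2 * α + 1) * (2 * β + 2) * (2 * β + 1)) := by
      unfold betaFn
      rw [show 2 * (α + 1) + 1 + (2 * (β + 1) + 1) = 2 * α + 1 + (2 * β + 1) + 2 + 2 by ring,
        show 2 * (α + 1) + 1 = 2 * α + 1 + 2 by ring, show 2 * (β + 1) + 1 = 2 * β + 1 + 2 by ring,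
        Gamma_two _ hA, Gamma_two _ hB,
        Gamma_two (2 * α + 1 + (2 * β + 1) + 2) (by rw [Complex.add_re]; simp only [Complex.re_ofNat]; linarith),
        Gamma_two _ hAB]
      have m1 : 2 * α + 1 + (2 * β + 1) + 2 + 1 = 2 * (α + β + 3 / 2 + 1) := by ring
      have m2 : 2 * α + 1 + (2 * β + 1) + 2 = 2 * (α + β + 2) := by ring
      have m3 : 2 * α + 1 + (2 * β + 1) + 1 = 2 * (α + β + 3 / 2) := by ring
      have m4 : 2 * α + 1 + (2 * β + 1) = 2 * (α + β + 1) := by ring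
      rw [m1, m2, m3]
      rw [m4] at nG ⊢
      generalize Complex.Gamma (2 * (α + β + 1)) = G at *
      generalize α + β + 3 / 2 + 1 = w1 at *
      generalize α + β + 3 / 2 = w2 at *
      generalize α + β + 2 = w3 at *
      generalize α + β + 1 = w4 at *
      field_simp
      ring
    have hpoch : ascPoch (α + β + 3 / 2) (l + 1) * (α + β + 3 / 2 + (l + 1)) =
        (α + β + 3 / 2) * (α + β + 3 / 2 + 1) * ascPoch (α + β + 3 / 2 + 1 + 1) l := by
      have := poch_succ_right (α + β + 3 / 2) (l + 1)
      rw [poch_succ_left, poch_succ_left] at this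
      push_cast at this
      rw [← this]; ring
    have hD : (2 * (2 * α + 1) * (2 * β + 1)) ≠ 0 := by simp [nA, nB]
    apply mul_left_cancel₀ hD
    rw [step, hpow, show α + 1 + (β + 1) + 3 / 2 = α + β + 3 / 2 + 1 + 1 by ring,
      poch_succ_left (α + 1), poch_succ_left (β + 1), poch_succ_right (1 / 2)]
    have hbeta' := eq_div_of_mul_eq (by simp [n0, n1, n2, n3]) hbeta
    have hpoch' := eq_div_of_mul_eq n4 hpoch
    rw [hbeta', hpoch']
    have k1 : 1 + (α + β) = α + β + 1 := by ring
    have k2 : 2 + (α + β) = α + β + 2 := by ring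
    have k3 : α + β + l + 5 / 2 = α + β + 3 / 2 + (l + 1) := by ring
    rw [k1, k2, k3]
    generalize ascPoch (α + β + 3 / 2 + 1 + 1) l = q at *
    generalize α + β + 3 / 2 + (l + 1) = w0 at *
    generalize α + β + 3 / 2 + 1 = w1 at *
    generalize α + β + 3 / 2 = w2 at *
    generalize α + β + 2 = w3 at *
    generalize α + β + 1 = w4 at *
    field_simp
    ring

end JacobiAux

theorem stmt0 (l : ℕ) (α β : ℂ) (hα : α.re > -1/2) (hβ : β.re > -1/2) :
    ∫ t in (-1 : ℝ)..1, (jacobiP l α β t) ^ 2 * (1 - (t : ℂ)) ^ (2 * α) * (1 + (t : ℂ)) ^ (2 * β)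
      = (2 : ℂ) ^ (2 * α + 2 * β + 1) * ascPoch (1/2) l / ((l.factorial : ℂ)) ^ 2 *
        betaFn (2 * α + 1) (2 * β + 1) *
        (ascPoch (α + 1) l * ascPoch (β + 1) l / ascPoch (α + β + 3/2) l) := by
  have hf : (l.factorial : ℂ) ≠ 0 := by exact_mod_cast l.factorial_ne_zero
  have main : ∫ t in (-1 : ℝ)..1,
      (jacobiP l α β t) ^ 2 * (1 - (t : ℂ)) ^ (2 * α) * (1 + (t : ℂ)) ^ (2 * β)
      = (1 / (4 ^ l * (l.factorial : ℂ) ^ 2)) * JacobiAux.K l α β := by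
    unfold JacobiAux.K
    rw [← intervalIntegral.integral_const_mul]
    apply intervalIntegral.integral_congr_Ioo_of_le (by norm_num)
    intro t ht
    have n1 : (1 - (t : ℂ)) ≠ 0 := by
      have : (1 - t) ≠ 0 := by linarith [ht.2]
      exact_mod_cast this
    have n2 : (1 + (t : ℂ)) ≠ 0 := by
      have : (1 + t) ≠ 0 := by linarith [ht.1]
      exact_mod_cast this
    have hj : jacobiP l α β t = ((-1 : ℂ) ^ l / (2 ^ l * (l.factorial : ℂ))) *
        (JacobiAux.R (α + l) (β + l) l).eval (t : ℂ) := by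
      unfold jacobiP
      rw [JacobiAux.iter _ _ l t ht, add_comm (l : ℂ) α, add_comm (l : ℂ) β,
        add_sub_cancel_right, add_sub_cancel_right, Complex.cpow_neg, Complex.cpow_neg]
      have p1 : (1 - (t : ℂ)) ^ α ≠ 0 := by simp [Complex.cpow_eq_zero_iff, n1]
      have p2 : (1 + (t : ℂ)) ^ β ≠ 0 := by simp [Complex.cpow_eq_zero_iff, n2]
      field_simp
    have hs : ((-1 : ℂ) ^ l / (2 ^ l * (l.factorial : ℂ))) ^ 2 =
        1 / (4 ^ l * (l.factorial : ℂ) ^ 2) := by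
      rw [div_pow, mul_pow, ← pow_mul, ← pow_mul, mul_comm l 2, pow_mul, pow_mul]
      norm_num
    simp only [hj, mul_pow, hs, Polynomial.eval_pow]
    ring
  rw [main, JacobiAux.K_formula l α β hα hβ]
  field_simp
end

section
/- Watson's theorem: if Re(2c - a - b + 1) > 0, then the hypergeometric value ₃F₂(a, b, c; (a+b+1)/2, 2c; 1) equals Γ(1/2)Γ(c+1/2)Γ((a+b+1)/2)Γ(c-(a+b-1)/2) / [Γ((a+1)/2)Γ((b+1)/2)Γ(c-(a-1)/2)Γ(c-(b-1)/2)]. -/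
open Filter Topology

namespace Watson

lemma ap_zero (s : ℂ) : ascPoch s 0 = 1 := by simp [ascPoch]

lemma ap_succ (s : ℂ) (k : ℕ) : ascPoch s (k + 1) = ascPoch s k * (s + k) := by
  simp [ascPoch, ascPochhammer_succ_eval]

lemma ap_shift (s : ℂ) (k : ℕ) : s * ascPoch (s + 1) k = ascPoch s k * (s + k) := by
  induction k with
  | zero => simp [ap_zero]
  | succ k ih =>
    rw [ap_succ, ap_succ, ← mul_assoc, ih]; push_cast; ring

lemma ap_ne {s : ℂ} (h : ∀ k : ℕ, s ≠ -(k : ℂ)) (k : ℕ) : ascPoch s k ≠ 0 := by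
  induction k with
  | zero => simp [ap_zero]
  | succ k ih =>
    rw [ap_succ]
    exact mul_ne_zero ih (fun h0 => h k (eq_neg_of_add_eq_zero_left h0))

lemma ap_one (k : ℕ) : ascPoch 1 k = (k.factorial : ℂ) := by
  induction k with
  | zero => simp [ap_zero]
  | succ k ih => rw [ap_succ, ih, Nat.factorial_succ]; push_cast; ring

lemma ap_prod (s : ℂ) (n : ℕ) : ascPoch s n = ∏ j ∈ Finset.range n, (s + (j : ℂ)) := by
  induction n with
  | zero => simp [ap_zero]
  | succ k ih => rw [ap_succ, ih, Finset.prod_range_succ]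

lemma ap_eventually_zero (m k : ℕ) : ascPoch (-(m : ℂ)) (m + 1 + k) = 0 := by
  rw [ap_prod]
  apply Finset.prod_eq_zero (i := m)
  · simp; omega
  · simp

/-- normalised Pochhammer symbol -/
noncomputable def q (s : ℂ) (n : ℕ) : ℂ := ascPoch s (n + 1) / ((n : ℂ) ^ s * n.factorial)

lemma q_tendsto (s : ℂ) : Tendsto (q s) atTop (𝓝 (Complex.Gamma s)⁻¹) := by
  by_cases h : Complex.Gamma s = 0
  · obtain ⟨m, rfl⟩ := (Complex.Gamma_eq_zero_iff s).1 h
    rw [h, inv_zero]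
    apply tendsto_const_nhds.congr'
    filter_upwards [eventually_ge_atTop m] with n hn
    obtain ⟨k, rfl⟩ := Nat.exists_eq_add_of_le hn
    have := ap_eventually_zero m k
    rw [q, show m + k + 1 = m + 1 + k by ring, this, zero_div]
  · have := (Complex.GammaSeq_tendsto_Gamma s).inv₀ h
    refine this.congr fun n => ?_
    rw [Complex.GammaSeq, q, ap_prod, inv_div]

lemma q_mul (s : ℂ) {n : ℕ} (hn : 0 < n) :
    ascPoch s (n + 1) = q s n * ((n : ℂ) ^ s * n.factorial) := by
  have h1 : (n : ℂ) ≠ 0 := by exact_mod_cast hn.ne'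
  have h2 : (n.factorial : ℂ) ≠ 0 := by exact_mod_cast n.factorial_ne_zero
  have h3 : (n : ℂ) ^ s ≠ 0 := by simp [Complex.cpow_eq_zero_iff, h1]
  rw [q]; field_simp

/-- the general term -/
noncomputable def W (a b c d e : ℂ) (k : ℕ) : ℂ :=
  ascPoch a k * ascPoch b k * ascPoch c k / (ascPoch d k * ascPoch e k * (k.factorial : ℂ))

lemma W_zero (a b c d e : ℂ) : W a b c d e 0 = 1 := by simp [W, ap_zero]

lemma W_asymp (a b c d e : ℂ) (hd : ∀ k : ℕ, d ≠ -(k : ℂ)) (he : ∀ k : ℕ, e ≠ -(k : ℂ)) :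
    (fun n : ℕ => W a b c d e (n + 1)) =O[atTop]
      (fun n : ℕ => (n : ℝ) ^ ((a + b + c - d - e).re - 1)) := by
  have hlim : Tendsto (fun n => q a n * q b n * q c n / (q d n * q e n * q 1 n)) atTop
      (𝓝 ((Complex.Gamma a)⁻¹ * (Complex.Gamma b)⁻¹ * (Complex.Gamma c)⁻¹ /
        ((Complex.Gamma d)⁻¹ * (Complex.Gamma e)⁻¹ * (Complex.Gamma 1)⁻¹))) := by
    refine (((q_tendsto a).mul (q_tendsto b)).mul (q_tendsto c)).div
      (((q_tendsto d).mul (q_tendsto e)).mul (q_tendsto 1)) ?_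
    have h1 := Complex.Gamma_ne_zero hd
    have h2 := Complex.Gamma_ne_zero he
    simp [h1, h2]
  have h1 := hlim.isBigO_one ℝ
  have h2 : (fun n : ℕ => (n : ℂ) ^ (a + b + c - d - e - 1)) =O[atTop]
      (fun n : ℕ => (n : ℝ) ^ ((a + b + c - d - e).re - 1)) := by
    apply Asymptotics.IsBigO.of_bound 1
    filter_upwards [eventually_gt_atTop 0] with n hn
    rw [Complex.norm_natCast_cpow_of_pos hn, one_mul]
    simp only [Complex.sub_re, Complex.one_re]
    exact le_abs_self _
  have h3 := h1.mul h2
  simp only [one_mul] at h3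
  refine h3.congr' ?_ EventuallyEq.rfl
  filter_upwards [eventually_gt_atTop 0] with n hn
  have hn0 : (n : ℂ) ≠ 0 := by exact_mod_cast hn.ne'
  have hf : (n.factorial : ℂ) ≠ 0 := by exact_mod_cast n.factorial_ne_zero
  have hp : ∀ s : ℂ, (n : ℂ) ^ s ≠ 0 := fun s => by simp [Complex.cpow_eq_zero_iff, hn0]
  rw [W, ← ap_one, q_mul a hn, q_mul b hn, q_mul c hn, q_mul d hn, q_mul e hn, q_mul 1 hn,
    Complex.cpow_sub _ _ hn0, Complex.cpow_sub _ _ hn0, Complex.cpow_sub _ _ hn0,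
    Complex.cpow_add _ _ hn0, Complex.cpow_add _ _ hn0]
  have hx := hp a; have := hp b; have := hp c; have := hp d; have := hp e; have := hp 1
  have hqd : ∀ s : ℂ, q s n = 0 ∨ q s n ≠ 0 := fun s => em _
  rcases hqd d with h | h
  · simp [h]
  rcases hqd e with hh | hh
  · simp [hh]
  rcases hqd 1 with hg | hg
  · simp [hg]
  field_simp

lemma W_summable (a b c d e : ℂ) (hd : ∀ k : ℕ, d ≠ -(k : ℂ)) (he : ∀ k : ℕ, e ≠ -(k : ℂ))
    (h : 0 < (d + e - a - b - c).re) : Summable (W a b c d e) := by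
  rw [← summable_nat_add_iff 1]
  refine summable_of_isBigO_nat (Real.summable_nat_rpow.2 ?_) (W_asymp a b c d e hd he)
  simp at h ⊢; linarith

lemma W_tendsto (a b c d e : ℂ) (hd : ∀ k : ℕ, d ≠ -(k : ℂ)) (he : ∀ k : ℕ, e ≠ -(k : ℂ))
    (h : 0 < (d + e - a - b - c).re) :
    Tendsto (fun n : ℕ => (n : ℂ) * W a b c d e (n + 1)) atTop (𝓝 0) := by
  have h1 : (fun n : ℕ => (n : ℂ)) =O[atTop] (fun n : ℕ => (n : ℝ)) := by
    apply Asymptotics.IsBigO.of_bound 1; simp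
  have h2 := h1.mul (W_asymp a b c d e hd he)
  refine h2.trans_tendsto ?_
  have h3 := (tendsto_rpow_neg_atTop h).comp (tendsto_natCast_atTop_atTop (R := ℝ))
  refine h3.congr' ?_
  filter_upwards [eventually_gt_atTop 0] with n hn
  have : (0:ℝ) < n := by exact_mod_cast hn
  simp only [Function.comp]
  rw [← Real.rpow_one_add' this.le]
  · congr 1; simp; ring
  · simp at h ⊢; intro h'; linarith

lemma frac_tendsto (s u : ℂ) : Tendsto (fun n : ℕ => (s + n) / (u + n)) atTop (𝓝 1) := by
  simpa using tendsto_add_mul_div_add_mul_atTop_nhds s u 1 (d := (1:ℂ)) one_ne_zero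

/-- Certificate -/
noncomputable def G (a b c : ℂ) (k : ℕ) : ℂ :=
  2 * (2 * c + 1) * (k * ((a + b + 1) / 2 + k - 1) / (2 * c + k)) *
    W a b c ((a + b + 1) / 2) (2 * c) k

lemma wz (a b c : ℂ) (hd : ∀ k : ℕ, (a + b + 1) / 2 ≠ -(k : ℂ))
    (he : ∀ k : ℕ, 2 * c ≠ -(k : ℂ)) (k : ℕ) :
    (2 * c - a + 1) * (2 * c - b + 1) * W a b (c + 1) ((a + b + 1) / 2) (2 * (c + 1)) k
      - (2 * c + 1) * (2 * c - a - b + 1) * W a b c ((a + b + 1) / 2) (2 * c) k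
      = G a b c (k + 1) - G a b c k := by
  have hc : c ≠ 0 := by have := he 0; simpa using this
  have hc1 : 2 * c + 1 ≠ 0 := by
    have := he 1; intro h; apply this; push_cast; linear_combination h
  have hck : 2 * c + k ≠ 0 := fun h => he k (eq_neg_of_add_eq_zero_left h)
  have hck1 : 2 * c + k + 1 ≠ 0 := fun h => he (k + 1) (by push_cast; linear_combination h)
  have hdk : (a + b + 1) / 2 + k ≠ 0 := fun h => hd k (eq_neg_of_add_eq_zero_left h)
  have hk1 : (k : ℂ) + 1 ≠ 0 := by exact_mod_cast k.succ_ne_zero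
  have hP := ap_ne hd k
  have hQ := ap_ne he k
  have hF : (k.factorial : ℂ) ≠ 0 := by exact_mod_cast k.factorial_ne_zero
  have e1 : ascPoch (c + 1) k = ascPoch c k * (c + k) / c := by
    rw [eq_div_iff hc, ← ap_shift]; ring
  have e2 : ascPoch (2 * (c + 1)) k
      = ascPoch (2 * c) k * (2 * c + k) * (2 * c + k + 1) / (2 * c * (2 * c + 1)) := by
    rw [eq_div_iff (by simp [hc, hc1])]
    have h1 := ap_shift (2 * c) k
    have h2 := ap_shift (2 * c + 1) k
    rw [show 2 * (c + 1) = 2 * c + 1 + 1 by ring]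
    linear_combination 2 * c * h2 + (2 * c + 1 + k) * h1
  generalize hdd : (a + b + 1) / 2 = d at *
  have hb : b = 2 * d - 1 - a := by rw [← hdd]; ring
  simp only [G, W, hdd, e1, e2, ap_succ, Nat.factorial_succ]
  push_cast
  generalize ascPoch d k = D at *
  generalize ascPoch (2 * c) k = E at *
  generalize ascPoch c k = C at *
  generalize ascPoch a k = A at *
  generalize ascPoch b k = B at *
  generalize (k.factorial : ℂ) = F at *
  have hck1' : 2 * c + (k + 1) ≠ 0 := by rw [← add_assoc]; exact hck1
  subst hb
  field_simp
  ring

lemma G_tendsto (a b c : ℂ) (hd : ∀ k : ℕ, (a + b + 1) / 2 ≠ -(k : ℂ))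
    (he : ∀ k : ℕ, 2 * c ≠ -(k : ℂ)) (hconv : (2 * c - a - b + 1).re > 0) :
    Tendsto (G a b c) atTop (𝓝 0) := by
  rw [← tendsto_add_atTop_iff_nat 1]
  have hre : 0 < ((a + b + 1) / 2 + 2 * c - a - b - c).re := by
    have : (a + b + 1) / 2 + 2 * c - a - b - c = ((1/2 : ℝ) : ℂ) * (2 * c - a - b + 1) := by
      push_cast; ring
    rw [this, Complex.re_ofReal_mul]; linarith
  have h1 := W_tendsto a b c _ _ hd he hre
  have h2 : Tendsto (fun n : ℕ => W a b c ((a + b + 1) / 2) (2 * c) (n + 1)) atTop (𝓝 0) :=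
    (tendsto_add_atTop_iff_nat 1).2 (W_summable a b c _ _ hd he hre).tendsto_atTop_zero
  have h3 := ((frac_tendsto ((a + b + 1) / 2) (2 * c + 1)).const_mul (2 * (2 * c + 1))).mul
    (h1.add h2)
  simp only [add_zero, mul_zero] at h3
  refine h3.congr fun n => ?_
  simp only [G]; push_cast
  ring

/-- the sum -/
noncomputable def S (a b c : ℂ) : ℂ := ∑' k, W a b c ((a + b + 1) / 2) (2 * c) k

lemma S_summable (a b c : ℂ) (hd : ∀ k : ℕ, (a + b + 1) / 2 ≠ -(k : ℂ))
    (he : ∀ k : ℕ, 2 * c ≠ -(k : ℂ)) (hconv : (2 * c - a - b + 1).re > 0) :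
    Summable (W a b c ((a + b + 1) / 2) (2 * c)) := by
  refine W_summable a b c _ _ hd he ?_
  have : (a + b + 1) / 2 + 2 * c - a - b - c = ((1/2 : ℝ) : ℂ) * (2 * c - a - b + 1) := by
    push_cast; ring
  rw [this, Complex.re_ofReal_mul]; linarith

lemma he_succ {c : ℂ} (he : ∀ k : ℕ, 2 * c ≠ -(k : ℂ)) (k : ℕ) : 2 * (c + 1) ≠ -(k : ℂ) := by
  intro h; apply he (k + 2); push_cast; linear_combination h

lemma S_rec (a b c : ℂ) (hd : ∀ k : ℕ, (a + b + 1) / 2 ≠ -(k : ℂ))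
    (he : ∀ k : ℕ, 2 * c ≠ -(k : ℂ)) (hconv : (2 * c - a - b + 1).re > 0) :
    (2 * c - a + 1) * (2 * c - b + 1) * S a b (c + 1)
      = (2 * c + 1) * (2 * c - a - b + 1) * S a b c := by
  have hconv' : (2 * (c + 1) - a - b + 1).re > 0 := by
    simp at hconv ⊢; linarith
  have h1 := (S_summable a b c hd he hconv).hasSum.mul_left ((2 * c + 1) * (2 * c - a - b + 1))
  have h2 := (S_summable a b (c + 1) hd (he_succ he) hconv').hasSum.mul_left
    ((2 * c - a + 1) * (2 * c - b + 1))
  have h3 := (h2.sub h1).tendsto_sum_nat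
  simp only [wz a b c hd he, Finset.sum_range_sub] at h3
  have h4 := (G_tendsto a b c hd he hconv).sub_const (G a b c 0)
  have h5 := tendsto_nhds_unique h3 h4
  have h6 : G a b c 0 = 0 := by simp [G]
  rw [h6, sub_zero] at h5
  exact sub_eq_zero.1 h5

lemma S_iter (a b : ℂ) (hd : ∀ k : ℕ, (a + b + 1) / 2 ≠ -(k : ℂ)) (n : ℕ) : ∀ (c : ℂ)
    (_ : ∀ k : ℕ, 2 * c ≠ -(k : ℂ)) (_ : (2 * c - a - b + 1).re > 0),
    ascPoch (c - (a - 1) / 2) n * ascPoch (c - (b - 1) / 2) n * S a b (c + n)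
      = ascPoch (c + 1 / 2) n * ascPoch (c - (a + b - 1) / 2) n * S a b c ∧
    (∀ k : ℕ, 2 * (c + n) ≠ -(k : ℂ)) ∧ (2 * (c + n) - a - b + 1).re > 0 := by
  intro c he hconv
  induction n with
  | zero => exact ⟨by simp [ap_zero], by simpa using he, by simpa using hconv⟩
  | succ n ih =>
    obtain ⟨h1, h2, h3⟩ := ih
    push_cast
    rw [← add_assoc]
    refine ⟨?_, he_succ h2, ?_⟩
    · have := S_rec a b (c + n) hd h2 h3
      simp only [ap_succ]
      linear_combination (1/4) * ascPoch (c - (a - 1) / 2) n * ascPoch (c - (b - 1) / 2) n * this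
        + (c + 1/2 + n) * (c - (a + b - 1)/2 + n) * h1
    · simp at h3 ⊢; linarith

lemma ratio_bound (z : ℂ) (X : ℝ) (hX : 0 < X) (hz : X ≤ z.re) (j : ℕ) :
    ‖(z + j) / (2 * z + j)‖ ≤ ‖((X : ℂ) + j) / (2 * (X : ℂ) + j)‖ := by
  have e1 : ‖(X : ℂ) + j‖ = X + j := by
    have : (X : ℂ) + j = ((X + j : ℝ) : ℂ) := by push_cast; ring
    rw [this, Complex.norm_real, Real.norm_of_nonneg (by positivity)]
  have e2 : ‖2 * (X : ℂ) + j‖ = 2 * X + j := by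
    have : 2 * (X : ℂ) + j = ((2 * X + j : ℝ) : ℂ) := by push_cast; ring
    rw [this, Complex.norm_real, Real.norm_of_nonneg (by positivity)]
  have hj : (0 : ℝ) ≤ j := Nat.cast_nonneg j
  have hpos : 0 < ‖2 * z + j‖ := by
    rw [norm_pos_iff]; intro h
    have := congrArg Complex.re h
    simp at this; linarith
  rw [norm_div, norm_div, e1, e2, div_le_div_iff₀ hpos (by positivity)]
  refine le_of_sq_le_sq ?_ (by positivity)
  rw [mul_pow, mul_pow, Complex.sq_norm, Complex.sq_norm, Complex.normSq_apply,
    Complex.normSq_apply]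
  simp only [Complex.add_re, Complex.add_im, Complex.mul_re, Complex.mul_im, Complex.natCast_re,
    Complex.natCast_im, Complex.re_ofNat, Complex.im_ofNat]
  have h1 : (z.re + j) * (2 * X + j) ≤ (X + j) * (2 * z.re + j) := by nlinarith
  have h2 : ((z.re + j) * (2 * X + j)) ^ 2 ≤ ((X + j) * (2 * z.re + j)) ^ 2 := by
    apply pow_le_pow_left₀ _ h1
    have : 0 ≤ z.re := by linarith
    positivity
  have h3 : (2 * X + j) ^ 2 ≤ 4 * (X + j) ^ 2 := by nlinarith
  nlinarith [mul_le_mul_of_nonneg_left h3 (sq_nonneg z.im)]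

lemma ap_ratio_bound (z : ℂ) (X : ℝ) (hX : 0 < X) (hz : X ≤ z.re) (k : ℕ) :
    ‖ascPoch z k / ascPoch (2 * z) k‖ ≤ ‖ascPoch X k / ascPoch (2 * X) k‖ := by
  induction k with
  | zero => simp [ap_zero]
  | succ k ih =>
    simp only [ap_succ, mul_div_mul_comm, norm_mul]
    have := ratio_bound z X hX hz k
    gcongr

lemma W_split (a b c d e : ℂ) (k : ℕ) : W a b c d e k =
    ascPoch a k * ascPoch b k / (ascPoch d k * k.factorial) * (ascPoch c k / ascPoch e k) := by
  rw [W, div_mul_div_comm]; congr 1; ring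

/-- the series of the second theorem of Gauss -/
noncomputable def L (a b : ℂ) : ℂ :=
  ∑' k : ℕ, ascPoch a k * ascPoch b k / (ascPoch ((a + b + 1) / 2) k * k.factorial) * (1 / 2) ^ k

lemma ap_ratio_tendsto (c : ℂ) (k : ℕ) :
    Tendsto (fun n : ℕ => ascPoch (c + n) k / ascPoch (2 * (c + n)) k) atTop
      (𝓝 ((1 / 2) ^ k)) := by
  induction k with
  | zero => simp [ap_zero]
  | succ k ih =>
    simp only [ap_succ, mul_div_mul_comm, pow_succ]
    refine ih.mul ?_
    have := tendsto_add_mul_div_add_mul_atTop_nhds (c + k) (2 * c + k) 1 (d := (2:ℂ)) two_ne_zero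
    refine this.congr fun n => ?_
    congr 1 <;> ring

lemma S_limit (a b c : ℂ) (hd : ∀ k : ℕ, (a + b + 1) / 2 ≠ -(k : ℂ)) :
    Tendsto (fun n : ℕ => S a b (c + n)) atTop (𝓝 (L a b)) := by
  obtain ⟨X, hX, hX2⟩ : ∃ X : ℝ, 0 < X ∧ (2 * (X : ℂ) - a - b + 1).re > 0 := by
    refine ⟨|a.re + b.re| + 1, by positivity, ?_⟩
    have h1 := le_abs_self (a.re + b.re)
    have h2 := abs_nonneg (a.re + b.re)
    simp; linarith
  have heX : ∀ k : ℕ, 2 * (X : ℂ) ≠ -(k : ℂ) := by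
    intro k h
    have := congrArg Complex.re h
    simp at this
    have hk : (0 : ℝ) ≤ k := Nat.cast_nonneg k
    linarith
  have hs := (S_summable a b X hd heX hX2).norm
  refine tendsto_tsum_of_dominated_convergence hs ?_ ?_
  · intro k
    simp only [W_split]
    exact (ap_ratio_tendsto c k).const_mul _
  · obtain ⟨N, hN⟩ := exists_nat_ge (X - c.re)
    filter_upwards [eventually_ge_atTop N] with n hn k
    rw [W_split, W_split, norm_mul, norm_mul]
    refine mul_le_mul_of_nonneg_left (ap_ratio_bound _ X hX ?_ k) (norm_nonneg _)
    have : (N : ℝ) ≤ n := by exact_mod_cast hn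
    simp; linarith

lemma S_eq (a b c : ℂ) (hd : ∀ k : ℕ, (a + b + 1) / 2 ≠ -(k : ℂ))
    (he : ∀ k : ℕ, 2 * c ≠ -(k : ℂ)) (hconv : (2 * c - a - b + 1).re > 0) :
    S a b c = L a b * Complex.Gamma (c + 1 / 2) * Complex.Gamma (c - (a + b - 1) / 2) /
      (Complex.Gamma (c - (a - 1) / 2) * Complex.Gamma (c - (b - 1) / 2)) := by
  have g1 : Complex.Gamma (c + 1 / 2) ≠ 0 := by
    apply Complex.Gamma_ne_zero
    intro m h; apply he (2 * m + 1); push_cast; linear_combination 2 * h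
  have g2 : Complex.Gamma (c - (a + b - 1) / 2) ≠ 0 := by
    apply Complex.Gamma_ne_zero_of_re_pos
    have : c - (a + b - 1) / 2 = ((1/2 : ℝ) : ℂ) * (2 * c - a - b + 1) := by
      push_cast; ring
    rw [this, Complex.re_ofReal_mul]; linarith
  have h1 : Tendsto (fun n : ℕ => q (c - (a - 1) / 2) n * q (c - (b - 1) / 2) n *
      S a b (c + (n + 1 : ℕ))) atTop _ :=
    ((q_tendsto _).mul (q_tendsto _)).mul
      ((tendsto_add_atTop_iff_nat (f := fun n : ℕ => S a b (c + n)) 1).2 (S_limit a b c hd))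
  have h2 : Tendsto (fun n : ℕ => q (c + 1 / 2) n * q (c - (a + b - 1) / 2) n *
      S a b c) atTop _ :=
    ((q_tendsto _).mul (q_tendsto _)).mul_const _
  have h3 := tendsto_nhds_unique (h1.congr' ?_) h2
  · rw [div_eq_mul_inv, mul_inv]
    generalize Complex.Gamma (c + 1 / 2) = A at *
    generalize Complex.Gamma (c - (a + b - 1) / 2) = B at *
    have hA : A * A⁻¹ = 1 := mul_inv_cancel₀ g1
    have hB : B * B⁻¹ = 1 := mul_inv_cancel₀ g2
    linear_combination (-(A * B)) * h3 - S a b c * B * B⁻¹ * hA - S a b c * hB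
  · filter_upwards [eventually_gt_atTop 0] with n hn
    have := (S_iter a b hd (n + 1) c he hconv).1
    have hn0 : (n : ℂ) ≠ 0 := by exact_mod_cast hn.ne'
    have hf : (n.factorial : ℂ) ≠ 0 := by exact_mod_cast n.factorial_ne_zero
    have hp : ∀ s : ℂ, (n : ℂ) ^ s ≠ 0 := fun s => by simp [Complex.cpow_eq_zero_iff, hn0]
    rw [q_mul _ hn, q_mul _ hn, q_mul _ hn, q_mul _ hn] at this
    have hpow : (n : ℂ) ^ (c - (a - 1) / 2) * (n : ℂ) ^ (c - (b - 1) / 2)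
        = (n : ℂ) ^ (c + 1 / 2) * (n : ℂ) ^ (c - (a + b - 1) / 2) := by
      rw [← Complex.cpow_add _ _ hn0, ← Complex.cpow_add _ _ hn0]; congr 1; ring
    have hne : (n : ℂ) ^ (c + 1 / 2) * (n : ℂ) ^ (c - (a + b - 1) / 2) *
      ((n.factorial : ℂ) * n.factorial) ≠ 0 := by simp only [ne_eq, mul_eq_zero, hp, hf, or_self, not_false_eq_true]
    apply mul_right_cancel₀ hne
    linear_combination this - q (c - (a - 1) / 2) n * q (c - (b - 1) / 2) n *
      S a b (c + (n + 1 : ℕ)) * n.factorial * n.factorial * hpow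

lemma anchor_sum (a b : ℂ) (h : ∀ k : ℕ, a + b + 1 ≠ -(k : ℂ))
    (hd : ∀ k : ℕ, (a + b + 1) / 2 ≠ -(k : ℂ)) (n : ℕ) :
    ∑ k ∈ Finset.range (n + 1), W a b ((a + b + 1) / 2) ((a + b + 1) / 2) (a + b + 1) k
      = ascPoch (a + 1) n * ascPoch (b + 1) n / (ascPoch (a + b + 1) n * n.factorial) := by
  induction n with
  | zero => simp [W_zero, ap_zero]
  | succ n ih =>
    rw [Finset.sum_range_succ, ih, W]
    have h1 := ap_ne hd (n + 1)
    have h2 := ap_ne h n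
    have h3 : a + b + 1 + n ≠ 0 := fun h0 => h n (eq_neg_of_add_eq_zero_left h0)
    have hf : (n.factorial : ℂ) ≠ 0 := by exact_mod_cast n.factorial_ne_zero
    have hk1 : (n : ℂ) + 1 ≠ 0 := by exact_mod_cast n.succ_ne_zero
    have ea : ascPoch a (n + 1) = a * ascPoch (a + 1) n := by rw [ap_succ, ap_shift]
    have eb : ascPoch b (n + 1) = b * ascPoch (b + 1) n := by rw [ap_succ, ap_shift]
    rw [ea, eb, ap_succ (a + b + 1), ap_succ (a + 1), ap_succ (b + 1), Nat.factorial_succ]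
    push_cast
    field_simp
    ring

lemma anchor (a b : ℂ) (h : ∀ k : ℕ, a + b + 1 ≠ -(k : ℂ))
    (hd : ∀ k : ℕ, (a + b + 1) / 2 ≠ -(k : ℂ)) :
    S a b ((a + b + 1) / 2) =
      Complex.Gamma (a + b + 1) / (Complex.Gamma (a + 1) * Complex.Gamma (b + 1)) := by
  have e2 : 2 * ((a + b + 1) / 2) = a + b + 1 := by ring
  have hs := S_summable a b ((a + b + 1) / 2) hd (by rw [e2]; exact h) (by
    rw [e2]; ring_nf; simp)
  rw [e2] at hs
  have h1 := (tendsto_add_atTop_iff_nat 2).2 hs.hasSum.tendsto_sum_nat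
  have h2 : Tendsto (fun n => q (a + 1) n * q (b + 1) n / (q (a + b + 1) n * q 1 n)) atTop
      (𝓝 ((Complex.Gamma (a + 1))⁻¹ * (Complex.Gamma (b + 1))⁻¹ /
        ((Complex.Gamma (a + b + 1))⁻¹ * (Complex.Gamma 1)⁻¹))) := by
    refine ((q_tendsto _).mul (q_tendsto _)).div ((q_tendsto _).mul (q_tendsto 1)) ?_
    have h1 := Complex.Gamma_ne_zero h
    simp [h1]
  have h3 := tendsto_nhds_unique (h1.congr' ?_) h2
  · rw [S, e2, h3, Complex.Gamma_one]
    simp [div_eq_mul_inv, mul_comm]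
  · filter_upwards [eventually_gt_atTop 0] with n hn
    rw [anchor_sum a b h hd (n + 1), ← ap_one]
    have hn0 : (n : ℂ) ≠ 0 := by exact_mod_cast hn.ne'
    have hf : (n.factorial : ℂ) ≠ 0 := by exact_mod_cast n.factorial_ne_zero
    have hp : ∀ s : ℂ, (n : ℂ) ^ s ≠ 0 := fun s => by simp [Complex.cpow_eq_zero_iff, hn0]
    rw [q_mul _ hn, q_mul _ hn, q_mul _ hn, q_mul _ hn]
    have hpow : (n : ℂ) ^ (a + 1) * (n : ℂ) ^ (b + 1)
        = (n : ℂ) ^ (a + b + 1) * (n : ℂ) ^ (1 : ℂ) := by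
      rw [← Complex.cpow_add _ _ hn0, ← Complex.cpow_add _ _ hn0]; congr 1; ring
    have hne : (n : ℂ) ^ (a + b + 1) * (n : ℂ) ^ (1 : ℂ) *
      ((n.factorial : ℂ) * n.factorial) ≠ 0 := by simp only [ne_eq, mul_eq_zero, hp, hf, or_self, not_false_eq_true]
    rw [← mul_div_mul_right _ (q (a + b + 1) n * q 1 n) hne]
    congr 1
    · rw [← hpow]; ring
    · ring

lemma L_generic (a b : ℂ) (ha : ∀ k : ℤ, a ≠ k) (hb : ∀ k : ℤ, b ≠ k)
    (hab : ∀ k : ℤ, a + b ≠ k) :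
    L a b = Complex.Gamma (1 / 2) * Complex.Gamma ((a + b + 1) / 2) *
      (Complex.Gamma ((a + 1) / 2))⁻¹ * (Complex.Gamma ((b + 1) / 2))⁻¹ := by
  have h : ∀ k : ℕ, a + b + 1 ≠ -(k : ℂ) := by
    intro k hk; apply hab (-k - 1); push_cast; linear_combination hk
  have hd : ∀ k : ℕ, (a + b + 1) / 2 ≠ -(k : ℂ) := by
    intro k hk; apply hab (-2 * k - 1); push_cast; linear_combination 2 * hk
  have e2 : 2 * ((a + b + 1) / 2) = a + b + 1 := by ring
  have hS := S_eq a b ((a + b + 1) / 2) hd (by rw [e2]; exact h) (by rw [e2]; ring_nf; simp)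
  rw [anchor a b h hd] at hS
  have k1 : (a + b + 1) / 2 - (a + b - 1) / 2 = 1 := by ring
  have k2 : (a + b + 1) / 2 - (a - 1) / 2 = (b + 1) / 2 + 1 / 2 := by ring
  have k3 : (a + b + 1) / 2 - (b - 1) / 2 = (a + 1) / 2 + 1 / 2 := by ring
  rw [k1, k2, k3, Complex.Gamma_one] at hS
  have d1 := Complex.Gamma_mul_Gamma_add_half ((a + 1) / 2)
  have d2 := Complex.Gamma_mul_Gamma_add_half ((b + 1) / 2)
  have d3 := Complex.Gamma_mul_Gamma_add_half ((a + b + 1) / 2)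
  have d4 := Complex.Gamma_mul_Gamma_add_half (1 / 2)
  have d4' : Complex.Gamma (1 / 2) = (√Real.pi : ℂ) := by
    norm_num at d4; norm_num; exact d4
  rw [show 2 * ((a + 1) / 2) = a + 1 by ring, show 1 - (a + 1) = -a by ring] at d1
  rw [show 2 * ((b + 1) / 2) = b + 1 by ring, show 1 - (b + 1) = -b by ring] at d2
  rw [e2, show 1 - (a + b + 1) = -a + -b by ring,
    Complex.cpow_add _ _ two_ne_zero] at d3
  have n1 : Complex.Gamma (a + 1) ≠ 0 := Complex.Gamma_ne_zero fun m hm =>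
    ha (-m - 1) (by push_cast; linear_combination hm)
  have n2 : Complex.Gamma (b + 1) ≠ 0 := Complex.Gamma_ne_zero fun m hm =>
    hb (-m - 1) (by push_cast; linear_combination hm)
  have n3 : Complex.Gamma ((a + 1) / 2) ≠ 0 := Complex.Gamma_ne_zero fun m hm =>
    ha (-2 * m - 1) (by push_cast; linear_combination 2 * hm)
  have n4 : Complex.Gamma ((b + 1) / 2) ≠ 0 := Complex.Gamma_ne_zero fun m hm =>
    hb (-2 * m - 1) (by push_cast; linear_combination 2 * hm)
  have n5 : Complex.Gamma ((a + b + 1) / 2 + 1 / 2) ≠ 0 := Complex.Gamma_ne_zero fun m hm =>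
    hab (-2 * m - 2) (by push_cast; linear_combination 2 * hm)
  have n6 : Complex.Gamma ((a + 1) / 2 + 1 / 2) ≠ 0 := Complex.Gamma_ne_zero fun m hm =>
    ha (-2 * m - 2) (by push_cast; linear_combination 2 * hm)
  have n7 : Complex.Gamma ((b + 1) / 2 + 1 / 2) ≠ 0 := Complex.Gamma_ne_zero fun m hm =>
    hb (-2 * m - 2) (by push_cast; linear_combination 2 * hm)
  rw [d4']
  generalize Complex.Gamma (a + 1) = A1 at *
  generalize Complex.Gamma (b + 1) = B1 at *
  generalize Complex.Gamma (a + b + 1) = D1 at *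
  generalize Complex.Gamma ((a + 1) / 2) = A2 at *
  generalize Complex.Gamma ((b + 1) / 2) = B2 at *
  generalize Complex.Gamma ((a + b + 1) / 2) = D2 at *
  generalize Complex.Gamma ((a + 1) / 2 + 1 / 2) = A3 at *
  generalize Complex.Gamma ((b + 1) / 2 + 1 / 2) = B3 at *
  generalize Complex.Gamma ((a + b + 1) / 2 + 1 / 2) = D3 at *
  generalize ((√Real.pi : ℝ) : ℂ) = p at *
  generalize (2 : ℂ) ^ (-a) = x at *
  generalize (2 : ℂ) ^ (-b) = y at *
  rw [div_eq_div_iff (by simp [n1, n2]) (by simp [n6, n7])] at hS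
  rw [mul_assoc, ← mul_inv, ← div_eq_mul_inv, eq_div_iff (by simp [n3, n4])]
  have : A1 * B1 * D3 ≠ 0 := by simp [n1, n2, n5]
  apply mul_left_cancel₀ this
  linear_combination (-(A2 * B2)) * hS + D1 * B2 * B3 * d1 + D1 * A1 * x * p * d2
    - A1 * B1 * p * d3

lemma ap_norm_le (a t : ℂ) (ht : ‖t‖ ≤ 1) (k : ℕ) :
    ‖ascPoch (a + t) k‖ ≤ ‖ascPoch ((‖a‖ + 1 : ℝ) : ℂ) k‖ := by
  induction k with
  | zero => simp [ap_zero]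
  | succ k ih =>
    simp only [ap_succ, norm_mul]
    gcongr
    have e1 : ‖((‖a‖ + 1 : ℝ) : ℂ) + k‖ = ‖a‖ + 1 + k := by
      have : ((‖a‖ + 1 : ℝ) : ℂ) + k = ((‖a‖ + 1 + k : ℝ) : ℂ) := by push_cast; ring
      rw [this, Complex.norm_real, Real.norm_of_nonneg (by positivity)]
    rw [e1]
    calc ‖a + t + k‖ ≤ ‖a‖ + ‖t‖ + ‖(k : ℂ)‖ := norm_add₃_le
      _ ≤ _ := by rw [Complex.norm_natCast]; linarith

lemma exists_delta (d : ℂ) (hd : ∀ k : ℕ, d ≠ -(k : ℂ)) :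
    ∃ δ : ℝ, 0 < δ ∧ ∀ k : ℕ, 4 * δ ≤ ‖d + k‖ := by
  have ht : Tendsto (fun k : ℕ => ‖d + k‖) atTop atTop := by
    refine tendsto_atTop_mono (f := fun k : ℕ => (k : ℝ) + (-‖d‖)) (fun k => ?_)
      (tendsto_atTop_add_const_right _ _ tendsto_natCast_atTop_atTop)
    have := norm_sub_le (d + k) d
    rw [add_sub_cancel_left, Complex.norm_natCast] at this
    linarith
  rw [← Nat.cofinite_eq_atTop] at ht
  obtain ⟨k0, h0⟩ := ht.exists_forall_le
  refine ⟨‖d + k0‖ / 4, ?_, fun k => by have := h0 k; linarith⟩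
  have : d + k0 ≠ 0 := fun h => hd k0 (eq_neg_of_add_eq_zero_left h)
  have := norm_pos_iff.2 this
  positivity

lemma ap_norm_ge (d t : ℂ) (δ : ℝ) (h : ∀ k : ℕ, 4 * δ ≤ ‖d + k‖) (ht : ‖t‖ ≤ δ) (k : ℕ) :
    ‖ascPoch d k‖ * (3 / 4) ^ k ≤ ‖ascPoch (d + t) k‖ := by
  induction k with
  | zero => simp [ap_zero]
  | succ k ih =>
    simp only [ap_succ, norm_mul, pow_succ]
    have h1 : ‖d + k‖ * (3 / 4) ≤ ‖d + t + k‖ := by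
      have := norm_sub_le (d + t + k) t
      rw [show d + t + k - t = d + k by ring] at this
      have := h k
      linarith
    calc ‖ascPoch d k‖ * ‖d + k‖ * ((3 / 4) ^ k * (3 / 4))
        = (‖ascPoch d k‖ * (3 / 4) ^ k) * (‖d + k‖ * (3 / 4)) := by ring
      _ ≤ _ := by gcongr

lemma bound_summable (A B : ℝ) (hA : 0 < A) (hB : 0 < B) (d : ℂ) (hd : ∀ k : ℕ, d ≠ -(k : ℂ)) :
    Summable (fun k : ℕ => ascPoch A k * ascPoch B k / (ascPoch d k * k.factorial) *
      (2 / 3 : ℂ) ^ k) := by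
  have hpos : ∀ A : ℝ, 0 < A → ∀ k : ℕ, (A : ℂ) ≠ -(k : ℂ) := by
    intro A hA k h
    have := congrArg Complex.re h
    simp at this
    have hk : (0 : ℝ) ≤ k := Nat.cast_nonneg k
    linarith
  refine summable_of_ratio_test_tendsto_lt_one (l := ‖(1 * 1 * (2 / 3) : ℂ)‖) (by norm_num) ?_ ?_
  · refine Eventually.of_forall fun k => ?_
    have hf : (k.factorial : ℂ) ≠ 0 := by exact_mod_cast k.factorial_ne_zero
    exact mul_ne_zero (div_ne_zero (mul_ne_zero (ap_ne (hpos A hA) k) (ap_ne (hpos B hB) k))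
      (mul_ne_zero (ap_ne hd k) hf)) (pow_ne_zero _ (by norm_num))
  · refine (((frac_tendsto A d).mul (frac_tendsto B 1)).mul_const (2 / 3)).norm.congr fun k => ?_
    have hf : (k.factorial : ℂ) ≠ 0 := by exact_mod_cast k.factorial_ne_zero
    have h1 := ap_ne (hpos A hA) k
    have h2 := ap_ne (hpos B hB) k
    have h3 := ap_ne hd k
    have h4 : d + k ≠ 0 := fun h => hd k (eq_neg_of_add_eq_zero_left h)
    have hk1 : (k : ℂ) + 1 ≠ 0 := by exact_mod_cast k.succ_ne_zero
    have hk2 : 1 + (k : ℂ) ≠ 0 := by rwa [add_comm]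
    rw [← norm_div]
    congr 1
    simp only [ap_succ, Nat.factorial_succ, pow_succ]
    push_cast
    field_simp
    ring

lemma ap_continuous (k : ℕ) : Continuous (fun s : ℂ => ascPoch s k) := by
  unfold ascPoch; fun_prop

lemma L_continuous (a b : ℂ) (hd : ∀ k : ℕ, (a + b + 1) / 2 ≠ -(k : ℂ)) :
    Tendsto (fun t : ℂ => L (a + t) (b + t)) (𝓝 0) (𝓝 (L a b)) := by
  obtain ⟨δ, hδ, hδ'⟩ := exists_delta _ hd
  have hs := (bound_summable (‖a‖ + 1) (‖b‖ + 1) (by positivity) (by positivity) _ hd).norm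
  have ed : ∀ t : ℂ, (a + t + (b + t) + 1) / 2 = (a + b + 1) / 2 + t := fun t => by ring
  unfold L
  simp only [ed]
  refine tendsto_tsum_of_dominated_convergence hs ?_ ?_
  · intro k
    have hf : (k.factorial : ℂ) ≠ 0 := by exact_mod_cast k.factorial_ne_zero
    have hc : ∀ s : ℂ, Tendsto (fun t : ℂ => ascPoch (s + t) k) (𝓝 0) (𝓝 (ascPoch s k)) := by
      intro s
      have : Continuous (fun t : ℂ => ascPoch (s + t) k) :=
        (ap_continuous k).comp (continuous_const.add continuous_id)
      simpa using this.tendsto 0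
    exact (((hc a).mul (hc b)).div ((hc _).mul_const _)
      (mul_ne_zero (ap_ne hd k) hf)).mul_const _
  · have hball : ∀ᶠ t : ℂ in 𝓝 0, ‖t‖ < min δ 1 := by
      have := Metric.ball_mem_nhds (0 : ℂ) (lt_min hδ one_pos)
      filter_upwards [this] with t ht
      simpa using ht
    filter_upwards [hball] with t ht k
    have ht1 : ‖t‖ ≤ 1 := ht.le.trans (min_le_right _ _)
    have ht2 : ‖t‖ ≤ δ := ht.le.trans (min_le_left _ _)
    have hf : 0 < (k.factorial : ℝ) := by exact_mod_cast k.factorial_pos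
    have h0 := norm_pos_iff.2 (ap_ne hd k)
    have b1 := ap_norm_le a t ht1 k
    have b2 := ap_norm_le b t ht1 k
    have b3 := ap_norm_ge _ t δ hδ' ht2 k
    simp only [norm_mul, norm_div, norm_pow, Complex.norm_natCast]
    have e1 : ‖(1 : ℂ)‖ / ‖(2 : ℂ)‖ = 1 / 2 := by norm_num
    have e2 : ‖(2 : ℂ)‖ / ‖(3 : ℂ)‖ = (1 / 2) * (3 / 4)⁻¹ := by norm_num
    rw [e1, e2, mul_pow]
    calc ‖ascPoch (a + t) k‖ * ‖ascPoch (b + t) k‖ /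
          (‖ascPoch ((a + b + 1) / 2 + t) k‖ * k.factorial) * (1 / 2) ^ k
        ≤ ‖ascPoch ((‖a‖ + 1 : ℝ) : ℂ) k‖ * ‖ascPoch ((‖b‖ + 1 : ℝ) : ℂ) k‖ /
          (‖ascPoch ((a + b + 1) / 2) k‖ * (3 / 4) ^ k * k.factorial) * (1 / 2) ^ k := by
          gcongr
      _ = _ := by
          rw [inv_pow]; field_simp

lemma L_eq (a b : ℂ) (hd : ∀ k : ℕ, (a + b + 1) / 2 ≠ -(k : ℂ)) :
    L a b = Complex.Gamma (1 / 2) * Complex.Gamma ((a + b + 1) / 2) *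
      (Complex.Gamma ((a + 1) / 2))⁻¹ * (Complex.Gamma ((b + 1) / 2))⁻¹ := by
  let bad : Set ℂ := (Set.range fun k : ℤ => (k : ℂ) - a) ∪ (Set.range fun k : ℤ => (k : ℂ) - b) ∪
    (Set.range fun k : ℤ => ((k : ℂ) - a - b) / 2)
  have hbad : bad.Countable :=
    ((Set.countable_range _).union (Set.countable_range _)).union (Set.countable_range _)
  have hdense := hbad.dense_compl ℂ
  have : (𝓝[badᶜ] (0 : ℂ)).NeBot := mem_closure_iff_nhdsWithin_neBot.1 (hdense 0)
  have h1 := (L_continuous a b hd).mono_left (nhdsWithin_le_nhds (s := badᶜ))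
  have c1 : ContinuousAt (fun t : ℂ => Complex.Gamma ((a + t + (b + t) + 1) / 2)) 0 := by
    have hg := (Complex.differentiableAt_Gamma _ hd).continuousAt
    refine ContinuousAt.comp (f := fun t : ℂ => (a + t + (b + t) + 1) / 2) (g := Complex.Gamma)
      ?_ (by fun_prop)
    simpa using hg
  have c2 : ∀ s : ℂ, ContinuousAt (fun t : ℂ => (Complex.Gamma ((s + t + 1) / 2))⁻¹) 0 := by
    intro s
    exact (Complex.differentiable_one_div_Gamma.continuous.comp
      (f := fun t : ℂ => (s + t + 1) / 2) (by fun_prop)).continuousAt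
  have h2 : Tendsto (fun t : ℂ => Complex.Gamma (1 / 2) *
      Complex.Gamma ((a + t + (b + t) + 1) / 2) *
      (Complex.Gamma ((a + t + 1) / 2))⁻¹ * (Complex.Gamma ((b + t + 1) / 2))⁻¹) (𝓝[badᶜ] 0)
      (𝓝 (Complex.Gamma (1 / 2) * Complex.Gamma ((a + b + 1) / 2) *
      (Complex.Gamma ((a + 1) / 2))⁻¹ * (Complex.Gamma ((b + 1) / 2))⁻¹)) := by
    have := ((((continuousAt_const (y := Complex.Gamma (1 / 2))).mul c1).mul (c2 a)).mul
      (c2 b)).tendsto.mono_left (nhdsWithin_le_nhds (s := badᶜ))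
    simp only [Pi.mul_apply, add_zero] at this
    exact this
  refine tendsto_nhds_unique (h1.congr' ?_) h2
  filter_upwards [self_mem_nhdsWithin] with t ht
  have ht' : t ∉ bad := ht
  simp only [bad, Set.mem_union, not_or, Set.mem_range, not_exists] at ht'
  obtain ⟨⟨t1, t2⟩, t3⟩ := ht'
  refine L_generic _ _ (fun k hk => t1 k ?_) (fun k hk => t2 k ?_) (fun k hk => t3 k ?_)
  · linear_combination -hk
  · linear_combination -hk
  · linear_combination (-1 / 2) * hk

end Watson

/-- Watson's theorem for the generalized hypergeometric series ₃F₂ at z = 1. -/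
theorem stmt8 (a b c : ℂ)
    (hd : ∀ k : ℕ, (a + b + 1) / 2 ≠ -(k : ℂ))
    (he : ∀ k : ℕ, 2 * c ≠ -(k : ℂ))
    (hconv : (2 * c - a - b + 1).re > 0) :
    (∑' k : ℕ, ascPoch a k * ascPoch b k * ascPoch c k /
        (ascPoch ((a + b + 1) / 2) k * ascPoch (2 * c) k * (k.factorial : ℂ)))
      = Complex.Gamma (1/2) * Complex.Gamma (c + 1/2) * Complex.Gamma ((a + b + 1)/2) *
          Complex.Gamma (c - (a + b - 1)/2) /
        (Complex.Gamma ((a + 1)/2) * Complex.Gamma ((b + 1)/2) *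
          Complex.Gamma (c - (a - 1)/2) * Complex.Gamma (c - (b - 1)/2)) := by
  have h := Watson.S_eq a b c hd he hconv
  rw [Watson.L_eq a b hd] at h
  simp only [Watson.S, Watson.W] at h
  rw [h]
  simp only [div_eq_mul_inv, mul_inv]
  ring
end
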